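/- arXiv:2008.06200 — 3 statements merged into one kernel-verified Lean document; each statement's English description precedes it below -/
import Mathlib

section
/- For every real s > 1, the function g(γ) = (ln γ)^(s-1) / (ζ(s) Γ(s) γ (γ-1)) is nonnegative on (1,∞) and satisfies ∫₁^∞ g(γ) dγ = 1; i.e., g is a probability density function on (1,∞). It is the density of γ = 1/p when p has density f(p) = (-ln p)^(s-1) / (ζ(s) Γ(s) (1-p)) on (0,1). -/
open MeasureTheory

/-- The Riemann zeta function for real `s > 1`, defined as `∑_{x=0}^∞ (x+1)^(-s)`. -/
noncomputable def zetaS (s : ℝ) : ℝ := ∑' x : ℕ, ((x : ℝ) + 1) ^ (-s)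

lemma aux_int (s : ℝ) (hs : 1 < s) :
    ∫ t in Set.Ioi (0 : ℝ), t ^ (s - 1) / (Real.exp t - 1) = zetaS s * Real.Gamma s := by
  have hG : 0 < Real.Gamma s := Real.Gamma_pos_of_pos (by linarith)
  have hI : ∀ n : ℕ, ∫ t in Set.Ioi (0 : ℝ), t ^ (s - 1) * Real.exp (-(((n : ℝ) + 1) * t))
      = ((n : ℝ) + 1) ^ (-s) * Real.Gamma s := by
    intro n
    have hn : (0 : ℝ) < (n : ℝ) + 1 := by positivity
    rw [Real.integral_rpow_mul_exp_neg_mul_Ioi (by linarith) hn, one_div,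
      Real.inv_rpow hn.le, Real.rpow_neg hn.le]
  have hS : Summable fun n : ℕ => ((n : ℝ) + 1) ^ (-s) := by
    have := (summable_nat_add_iff 1).2 (Real.summable_nat_rpow.2 (by linarith : -s < -1))
    simpa using this
  have key := hasSum_integral_of_summable_integral_norm
    (μ := volume.restrict (Set.Ioi (0 : ℝ)))
    (F := fun (n : ℕ) (t : ℝ) => t ^ (s - 1) * Real.exp (-(((n : ℝ) + 1) * t))) ?_ ?_
  · simp_rw [hI] at key
    have h2 := key.unique (hS.hasSum.mul_right (Real.Gamma s))
    rw [zetaS, ← h2]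
    refine setIntegral_congr_fun measurableSet_Ioi fun t ht => ?_
    have ht : 0 < t := ht
    have he : Real.exp (-t) < 1 := by simpa using ht
    have hg := ((hasSum_geometric_of_lt_one (Real.exp_pos (-t)).le he).mul_left
      (t ^ (s - 1) * Real.exp (-t))).tsum_eq
    have : ∀ n : ℕ, t ^ (s - 1) * Real.exp (-(((n : ℝ) + 1) * t))
        = t ^ (s - 1) * Real.exp (-t) * Real.exp (-t) ^ n := by
      intro n
      rw [← Real.exp_nat_mul, mul_assoc, ← Real.exp_add]
      ring_nf
    simp only [this, hg]
    have h1 : 1 < Real.exp t := Real.one_lt_exp_iff.2 ht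
    have h3 : Real.exp t - 1 ≠ 0 := by linarith
    rw [Real.exp_neg]
    have h4 : 1 - (Real.exp t)⁻¹ = (Real.exp t - 1) / Real.exp t := by
      field_simp
    rw [h4]
    field_simp
  · intro n
    by_contra h
    have h0 := integral_undef h
    rw [hI n] at h0
    have : (0 : ℝ) < ((n : ℝ) + 1) ^ (-s) * Real.Gamma s := by positivity
    linarith
  · refine (hS.mul_right (Real.Gamma s)).congr fun n => ?_
    rw [← hI n]
    refine setIntegral_congr_fun measurableSet_Ioi fun t ht => ?_
    have ht : 0 < t := ht
    exact (Real.norm_of_nonneg (by positivity)).symm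

lemma zetaS_pos_aux (s : ℝ) (hs : 1 < s) : 0 < zetaS s := by
  have hS : Summable fun n : ℕ => ((n : ℝ) + 1) ^ (-s) := by
    have := (summable_nat_add_iff 1).2 (Real.summable_nat_rpow.2 (by linarith : -s < -1))
    simpa using this
  exact hS.tsum_pos (fun n => by positivity) 0 (by positivity)

/-- The function `g(γ) = (ln γ)^(s-1)/(ζ(s)Γ(s)γ(γ-1))` is a probability density
on `(1,∞)`: it is nonnegative there and integrates to 1.  Moreover it is the
density of `γ = 1/p` when `p` has density `f(p) = (-ln p)^(s-1)/(ζ(s)Γ(s)(1-p))`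
on `(0,1)`, i.e. `g(γ) = f(1/γ)·γ⁻²` on `(1,∞)`. -/
theorem reciprocal_mixing_density_is_pdf (s : ℝ) (hs : 1 < s) :
    (∀ γ ∈ Set.Ioi (1 : ℝ),
        0 ≤ (Real.log γ) ^ (s - 1) / (zetaS s * Real.Gamma s * γ * (γ - 1))) ∧
    (∫ γ in Set.Ioi (1 : ℝ),
        (Real.log γ) ^ (s - 1) / (zetaS s * Real.Gamma s * γ * (γ - 1)) = 1) ∧
    (∀ γ ∈ Set.Ioi (1 : ℝ),
        (Real.log γ) ^ (s - 1) / (zetaS s * Real.Gamma s * γ * (γ - 1))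
          = ((-Real.log (1 / γ)) ^ (s - 1) / (zetaS s * Real.Gamma s * (1 - 1 / γ)))
              * (1 / γ ^ 2)) := by
  have hG : 0 < Real.Gamma s := Real.Gamma_pos_of_pos (by linarith)
  have hZ := zetaS_pos_aux s hs
  refine ⟨fun γ hγ => ?_, ?_, fun γ hγ => ?_⟩
  · have h1 : 1 < γ := hγ
    have h2 : 0 < γ - 1 := by linarith
    have h3 : 0 < Real.log γ := Real.log_pos h1
    positivity
  · have himg : Real.exp '' Set.Ioi 0 = Set.Ioi (1 : ℝ) := by
      ext x
      constructor
      · rintro ⟨t, ht, rfl⟩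
        exact Real.one_lt_exp_iff.2 ht
      · intro hx
        have hx : 1 < x := hx
        exact ⟨Real.log x, Real.log_pos hx, Real.exp_log (by linarith)⟩
    rw [← himg, integral_image_eq_integral_abs_deriv_smul measurableSet_Ioi
      (fun x _ => (Real.hasDerivAt_exp x).hasDerivWithinAt) Real.exp_injective.injOn]
    have : ∫ t in Set.Ioi (0 : ℝ), t ^ (s - 1) / (Real.exp t - 1) / (zetaS s * Real.Gamma s) = 1 := by
      rw [integral_div, aux_int s hs, div_self (by positivity)]
    refine Eq.trans ?_ this
    refine setIntegral_congr_fun measurableSet_Ioi fun t ht => ?_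
    have h1 : 1 < Real.exp t := Real.one_lt_exp_iff.2 ht
    have h3 : Real.exp t - 1 ≠ 0 := by linarith
    simp only [Real.log_exp, abs_of_pos (Real.exp_pos t), smul_eq_mul]
    field_simp
  · have h1 : 1 < γ := hγ
    have h2 : γ - 1 ≠ 0 := by linarith
    have h0 : γ ≠ 0 := by linarith
    have h4 : 1 - 1 / γ = (γ - 1) / γ := by field_simp
    rw [h4, one_div, Real.log_inv, neg_neg]
    field_simp
end

section
/- For every real s > 1, every real r with 0 < r < 1, and every natural number x, ∫₀¹ [Γ(r+x)/(Γ(r)Γ(x+1))] p^x (1-p)^r · f(p) dp = (x+1)^(-s)/ζ(s), where f(p) = (1/(ζ(s)Γ(s)(1-p)^r)) · [ (s-1) ∫_p^1 (ω-p)^(r-1) (-ln ω)^(s-2) / ω^r dω + (r-1) ∫_p^1 (ω-p)^(r-1) (-ln ω)^(s-1) / ω^r dω ]. That is, the Zeta(s) probability mass function is the continuous mixture of Negative Binomial(r,p) probability mass functions, for fixed r ∈ (0,1), with mixing quasi-density f. -/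
open MeasureTheory

lemma aux_beta_unit (r : ℝ) (hr : 0 < r) (x : ℕ) :
    IntegrableOn (fun p : ℝ => p ^ x * (1 - p) ^ (r - 1)) (Set.Ioo 0 1) ∧
    ∫ p in Set.Ioo (0:ℝ) 1, p ^ x * (1 - p) ^ (r - 1) =
      ProbabilityTheory.beta ((x:ℝ) + 1) r := by
  have hx : (0:ℝ) < (x:ℝ) + 1 := by positivity
  have hc := Complex.betaIntegral_convergent (u := ((x:ℝ) + 1 : ℝ)) (v := (r : ℝ))
    (by simpa using hx) (by simpa using hr)
  rw [intervalIntegrable_iff_integrableOn_Ioc_of_le (by simp), integrableOn_Ioc_iff_integrableOn_Ioo] at hc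
  have heq : ∀ p ∈ Set.Ioo (0:ℝ) 1, ((p : ℂ) ^ ((((x:ℝ) + 1 : ℝ) : ℂ) - 1) * (1 - (p:ℂ)) ^ ((r:ℂ) - 1))
      = ((p ^ x * (1 - p) ^ (r - 1) : ℝ) : ℂ) := by
    intro p hp
    have h1 : (((x:ℝ) + 1 : ℝ) : ℂ) - 1 = (x : ℂ) := by push_cast; ring
    rw [h1, Complex.cpow_natCast]
    push_cast
    rw [Complex.ofReal_cpow (by linarith [hp.2])]
    push_cast
    rfl
  have hc2 : IntegrableOn (fun p : ℝ => ((p ^ x * (1 - p) ^ (r - 1) : ℝ) : ℂ)) (Set.Ioo 0 1) :=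
    hc.congr_fun heq measurableSet_Ioo
  refine ⟨?_, ?_⟩
  · have := hc2.re
    simp only [RCLike.re_to_complex, Complex.ofReal_re] at this
    exact this
  · rw [ProbabilityTheory.beta_eq_betaIntegralReal _ _ hx hr, Complex.betaIntegral,
      intervalIntegral.integral_of_le (by norm_num), integral_Ioc_eq_integral_Ioo,
      setIntegral_congr_fun measurableSet_Ioo heq, integral_complex_ofReal, Complex.ofReal_re]

lemma aux_beta (r : ℝ) (hr : 0 < r) (x : ℕ) (w : ℝ) (hw : 0 < w) :
    IntegrableOn (fun p : ℝ => p ^ x * (w - p) ^ (r - 1)) (Set.Ioo 0 w) ∧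
    ∫ p in Set.Ioo (0:ℝ) w, p ^ x * (w - p) ^ (r - 1) =
      w ^ x * w ^ r * ProbabilityTheory.beta ((x:ℝ) + 1) r := by
  obtain ⟨h1, h2⟩ := aux_beta_unit r hr x
  have him : (fun p : ℝ => w * p) '' Set.Ioo 0 1 = Set.Ioo 0 w := by
    rw [Set.image_mul_left_Ioo hw]; simp
  have hd : ∀ p ∈ Set.Ioo (0:ℝ) 1, HasDerivWithinAt (fun p : ℝ => w * p) ((fun _ => w) p) (Set.Ioo 0 1) p := by
    intro p _
    simpa using ((hasDerivAt_id p).const_mul w).hasDerivWithinAt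
  have hinj : Set.InjOn (fun p : ℝ => w * p) (Set.Ioo 0 1) := by
    intro a _ b _ hab
    exact mul_left_cancel₀ hw.ne' hab
  have heq : ∀ p ∈ Set.Ioo (0:ℝ) 1, (w ^ x * w ^ r) * (p ^ x * (1 - p) ^ (r - 1)) =
      |w| • ((w * p) ^ x * (w - w * p) ^ (r - 1)) := by
    intro p hp
    have : w - w * p = w * (1 - p) := by ring
    rw [this, Real.mul_rpow hw.le (by linarith [hp.2]), abs_of_pos hw, mul_pow,
      Real.rpow_sub_one hw.ne', smul_eq_mul]
    field_simp
  rw [← him]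
  refine ⟨?_, ?_⟩
  · rw [integrableOn_image_iff_integrableOn_abs_deriv_smul measurableSet_Ioo hd hinj]
    exact IntegrableOn.congr_fun (h1.const_mul (w ^ x * w ^ r)) heq measurableSet_Ioo
  · rw [integral_image_eq_integral_abs_deriv_smul measurableSet_Ioo hd hinj,
      ← setIntegral_congr_fun measurableSet_Ioo heq, integral_const_mul, h2]

lemma aux_gamma (a : ℝ) (ha : 0 < a) (x : ℕ) :
    IntegrableOn (fun w : ℝ => w ^ x * (-Real.log w) ^ (a - 1)) (Set.Ioo 0 1) ∧
    ∫ w in Set.Ioo (0:ℝ) 1, w ^ x * (-Real.log w) ^ (a - 1) =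
      ((x:ℝ) + 1) ^ (-a) * Real.Gamma a := by
  have hx : (0:ℝ) < (x:ℝ) + 1 := by positivity
  have him : (fun t : ℝ => Real.exp (-t)) '' Set.Ioi 0 = Set.Ioo 0 1 := by
    ext y
    constructor
    · rintro ⟨t, ht, rfl⟩
      exact ⟨Real.exp_pos _, by simpa using ht⟩
    · rintro ⟨h0, h1⟩
      exact ⟨-Real.log y, by simpa using Real.log_neg h0 h1, by simp [Real.exp_log h0]⟩
  have hd : ∀ t ∈ Set.Ioi (0:ℝ), HasDerivWithinAt (fun t : ℝ => Real.exp (-t))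
      ((fun t => - Real.exp (-t)) t) (Set.Ioi 0) t := by
    intro t _
    simpa using ((hasDerivAt_id t).neg.exp).hasDerivWithinAt
  have hinj : Set.InjOn (fun t : ℝ => Real.exp (-t)) (Set.Ioi 0) := by
    intro a _ b _ hab
    simpa using hab
  have heq : ∀ t ∈ Set.Ioi (0:ℝ), t ^ (a - 1) * Real.exp (-(((x:ℝ) + 1) * t)) =
      |-Real.exp (-t)| • (Real.exp (-t) ^ x * (-Real.log (Real.exp (-t))) ^ (a - 1)) := by
    intro t _
    rw [abs_neg, abs_of_pos (Real.exp_pos _), Real.log_exp, neg_neg, smul_eq_mul, ← Real.exp_nat_mul,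
      ← mul_assoc, ← Real.exp_add, mul_comm]
    congr 2
    ring
  rw [← him]
  refine ⟨?_, ?_⟩
  · rw [integrableOn_image_iff_integrableOn_abs_deriv_smul measurableSet_Ioi hd hinj]
    have := integrableOn_rpow_mul_exp_neg_mul_rpow (p := 1) (s := a - 1) (by linarith) one_pos hx
    refine IntegrableOn.congr_fun this (fun t ht => ?_) measurableSet_Ioi
    rw [← heq t ht]
    simp only [Real.rpow_one, neg_mul]
  · rw [integral_image_eq_integral_abs_deriv_smul measurableSet_Ioi hd hinj,
      ← setIntegral_congr_fun measurableSet_Ioi heq, Real.integral_rpow_mul_exp_neg_mul_Ioi ha hx,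
      one_div, Real.inv_rpow hx.le, Real.rpow_neg hx.le]

/-- kernel -/
noncomputable def auxK (r a : ℝ) (x : ℕ) (w p : ℝ) : ℝ :=
  if p < w then p ^ x * ((w - p) ^ (r - 1) * (-Real.log w) ^ (a - 1) / w ^ r) else 0

lemma auxK_meas (r a : ℝ) (x : ℕ) : Measurable (Function.uncurry (auxK r a x)) := by
  unfold auxK Function.uncurry
  refine Measurable.ite (measurableSet_lt measurable_snd measurable_fst) ?_ measurable_const
  fun_prop

lemma auxK_fun_w (r a : ℝ) (x : ℕ) (w : ℝ) (hw : w ∈ Set.Ioo (0:ℝ) 1) :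
    (Set.Ioo (0:ℝ) 1).indicator (fun p => auxK r a x w p) =
     (Set.Ioo (0:ℝ) w).indicator
      (fun p => (-Real.log w) ^ (a - 1) / w ^ r * (p ^ x * (w - p) ^ (r - 1))) := by
  ext p
  simp only [Set.indicator, Set.mem_Ioo, auxK]
  have := hw.1
  have := hw.2
  by_cases h0 : 0 < p <;> by_cases h1 : p < w
  · rw [if_pos ⟨h0, h1.trans hw.2⟩, if_pos h1, if_pos ⟨h0, h1⟩]; ring
  all_goals simp [h0, h1]

lemma auxK_fun_p (r a : ℝ) (x : ℕ) (p : ℝ) (hp : p ∈ Set.Ioo (0:ℝ) 1) :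
    (Set.Ioo (0:ℝ) 1).indicator (fun w => auxK r a x w p) =
     (Set.Ioo p 1).indicator
      (fun w => p ^ x * ((w - p) ^ (r - 1) * (-Real.log w) ^ (a - 1) / w ^ r)) := by
  ext w
  simp only [Set.indicator, Set.mem_Ioo, auxK]
  by_cases h1 : p < w
  · have := hp.1.trans h1
    simp [h1, this]
  · simp [h1]

lemma auxK_nonneg (r a : ℝ) (x : ℕ) (w p : ℝ) (hw : w ∈ Set.Ioo (0:ℝ) 1) (hp : p ∈ Set.Ioo (0:ℝ) 1) :
    0 ≤ auxK r a x w p := by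
  unfold auxK
  split_ifs with h
  · have h1 := Real.log_neg hw.1 hw.2
    have h2 := hp.1
    have h3 := hw.1
    have h4 : 0 ≤ w - p := by linarith
    have h5 : 0 ≤ -Real.log w := by linarith
    positivity
  · exact le_rfl

lemma auxK_int (r : ℝ) (hr : 0 < r) (a : ℝ) (x : ℕ) (w : ℝ) (hw : w ∈ Set.Ioo (0:ℝ) 1) :
    IntegrableOn (fun p => auxK r a x w p) (Set.Ioo 0 1) ∧
    ∫ p in Set.Ioo (0:ℝ) 1, auxK r a x w p =
      ProbabilityTheory.beta ((x:ℝ) + 1) r * (w ^ x * (-Real.log w) ^ (a - 1)) := by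
  obtain ⟨h1, h2⟩ := aux_beta r hr x w hw.1
  refine ⟨?_, ?_⟩
  · rw [← integrable_indicator_iff measurableSet_Ioo, auxK_fun_w r a x w hw,
      integrable_indicator_iff measurableSet_Ioo]
    exact h1.const_mul _
  · rw [← integral_indicator measurableSet_Ioo, auxK_fun_w r a x w hw,
      integral_indicator measurableSet_Ioo, integral_const_mul, h2]
    have : w ^ r ≠ 0 := (Real.rpow_pos_of_pos hw.1 r).ne'
    field_simp

lemma auxK_integrable (r : ℝ) (hr : 0 < r) (a : ℝ) (ha : 0 < a) (x : ℕ) :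
    Integrable (Function.uncurry (auxK r a x))
      ((volume.restrict (Set.Ioo (0:ℝ) 1)).prod (volume.restrict (Set.Ioo (0:ℝ) 1))) := by
  rw [integrable_prod_iff (auxK_meas r a x).aestronglyMeasurable]
  refine ⟨?_, ?_⟩
  · exact ae_restrict_of_forall_mem measurableSet_Ioo (fun w hw => (auxK_int r hr a x w hw).1)
  · have := ((aux_gamma a ha x).1.const_mul (ProbabilityTheory.beta ((x:ℝ) + 1) r))
    refine IntegrableOn.congr_fun this (fun w hw => ?_) measurableSet_Ioo
    simp only [Function.uncurry]
    rw [← (auxK_int r hr a x w hw).2]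
    refine setIntegral_congr_fun measurableSet_Ioo (fun p hp => ?_)
    exact (Real.norm_of_nonneg (auxK_nonneg r a x w p hw hp)).symm

lemma aux_main (r : ℝ) (hr : 0 < r) (a : ℝ) (ha : 0 < a) (x : ℕ) :
    IntegrableOn (fun p : ℝ => p ^ x * ∫ w in Set.Ioo p 1,
      (w - p) ^ (r - 1) * (-Real.log w) ^ (a - 1) / w ^ r) (Set.Ioo 0 1) ∧
    ∫ p in Set.Ioo (0:ℝ) 1, (p ^ x * ∫ w in Set.Ioo p 1,
      (w - p) ^ (r - 1) * (-Real.log w) ^ (a - 1) / w ^ r) =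
      ProbabilityTheory.beta ((x:ℝ) + 1) r * (((x:ℝ) + 1) ^ (-a) * Real.Gamma a) := by
  have hK := auxK_integrable r hr a ha x
  have heq : ∀ p ∈ Set.Ioo (0:ℝ) 1, (∫ w in Set.Ioo (0:ℝ) 1, auxK r a x w p) =
      p ^ x * ∫ w in Set.Ioo p 1, (w - p) ^ (r - 1) * (-Real.log w) ^ (a - 1) / w ^ r := by
    intro p hp
    rw [← integral_indicator measurableSet_Ioo, auxK_fun_p r a x p hp,
      integral_indicator measurableSet_Ioo, integral_const_mul]
  refine ⟨?_, ?_⟩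
  · exact IntegrableOn.congr_fun hK.integral_prod_right heq measurableSet_Ioo
  · rw [← setIntegral_congr_fun measurableSet_Ioo heq, ← integral_integral_swap hK,
      setIntegral_congr_fun measurableSet_Ioo (fun w hw => (auxK_int r hr a x w hw).2),
      integral_const_mul, (aux_gamma a ha x).2]

/-- The Zeta(s) pmf is the continuous mixture of Negative Binomial(r,p) pmfs,
for fixed `r ∈ (0,1)`, with mixing quasi-density
`f(p) = (1/(ζ(s)Γ(s)(1-p)^r)) [ (s-1)∫_p^1 (ω-p)^(r-1)(-ln ω)^(s-2)/ω^r dω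
 + (r-1)∫_p^1 (ω-p)^(r-1)(-ln ω)^(s-1)/ω^r dω ]`. -/
theorem zeta_as_negBinomial_mixture_r_lt_one (s : ℝ) (hs : 1 < s)
    (r : ℝ) (hr0 : 0 < r) (hr1 : r < 1) (x : ℕ) :
    ∫ p in Set.Ioo (0 : ℝ) 1,
      (Real.Gamma (r + x) / (Real.Gamma r * Real.Gamma ((x : ℝ) + 1))) *
        p ^ x * (1 - p) ^ r *
        ((1 / (zetaS s * Real.Gamma s * (1 - p) ^ r)) *
          ((s - 1) *
              (∫ ω in Set.Ioo p 1,
                (ω - p) ^ (r - 1) * (-Real.log ω) ^ (s - 2) / ω ^ r) +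
            (r - 1) *
              (∫ ω in Set.Ioo p 1,
                (ω - p) ^ (r - 1) * (-Real.log ω) ^ (s - 1) / ω ^ r)))
      = ((x : ℝ) + 1) ^ (-s) / zetaS s := by
  obtain ⟨i1, e1⟩ := aux_main r hr0 (s - 1) (by linarith) x
  obtain ⟨i2, e2⟩ := aux_main r hr0 s (by linarith) x
  have hss : s - 1 - 1 = s - 2 := by ring
  rw [hss] at i1 e1
  set C := Real.Gamma (r + x) / (Real.Gamma r * Real.Gamma ((x : ℝ) + 1)) with hC
  have hx : (0:ℝ) < (x:ℝ) + 1 := by positivity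
  have heq : ∀ p ∈ Set.Ioo (0:ℝ) 1, C *
        p ^ x * (1 - p) ^ r *
        ((1 / (zetaS s * Real.Gamma s * (1 - p) ^ r)) *
          ((s - 1) *
              (∫ ω in Set.Ioo p 1,
                (ω - p) ^ (r - 1) * (-Real.log ω) ^ (s - 2) / ω ^ r) +
            (r - 1) *
              (∫ ω in Set.Ioo p 1,
                (ω - p) ^ (r - 1) * (-Real.log ω) ^ (s - 1) / ω ^ r))) =
      (C / (zetaS s * Real.Gamma s)) * ((s - 1) * (p ^ x * (∫ ω in Set.Ioo p 1,
                (ω - p) ^ (r - 1) * (-Real.log ω) ^ (s - 2) / ω ^ r)) +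
            (r - 1) *
              (p ^ x * (∫ ω in Set.Ioo p 1,
                (ω - p) ^ (r - 1) * (-Real.log ω) ^ (s - 1) / ω ^ r))) := by
    intro p hp
    have h : (1 - p) ^ r ≠ 0 := (Real.rpow_pos_of_pos (by linarith [hp.2]) r).ne'
    rw [one_div, mul_inv]
    generalize (∫ ω in Set.Ioo p 1, (ω - p) ^ (r - 1) * (-Real.log ω) ^ (s - 2) / ω ^ r) = A
    generalize (∫ ω in Set.Ioo p 1, (ω - p) ^ (r - 1) * (-Real.log ω) ^ (s - 1) / ω ^ r) = B
    rw [div_eq_mul_inv]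
    generalize (zetaS s * Real.Gamma s)⁻¹ = D
    field_simp
  rw [setIntegral_congr_fun measurableSet_Ioo heq, integral_const_mul,
    integral_add (i1.const_mul _) (i2.const_mul _), integral_const_mul, integral_const_mul, e1, e2]
  have g1 : Real.Gamma s = (s - 1) * Real.Gamma (s - 1) := by
    have := Real.Gamma_add_one (s := s - 1) (by linarith)
    simpa using this
  have g2 : Real.Gamma ((x:ℝ) + 1 + r) = (r + x) * Real.Gamma (r + x) := by
    rw [← Real.Gamma_add_one (by positivity)]; congr 1; ring
  have p1 : Real.Gamma (s - 1) ≠ 0 := (Real.Gamma_pos_of_pos (by linarith)).ne'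
  have p2 : Real.Gamma (r + x) ≠ 0 := (Real.Gamma_pos_of_pos (by positivity)).ne'
  have p3 : Real.Gamma r ≠ 0 := (Real.Gamma_pos_of_pos hr0).ne'
  have p4 : Real.Gamma ((x:ℝ) + 1) ≠ 0 := (Real.Gamma_pos_of_pos hx).ne'
  have p5 : s - 1 ≠ 0 := by linarith
  have p6 : r + x ≠ 0 := by positivity
  have hpow : ((x:ℝ) + 1) ^ (-(s - 1)) = ((x:ℝ) + 1) ^ (-s) * ((x:ℝ) + 1) := by
    rw [← Real.rpow_add_one hx.ne']; congr 1; ring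
  rw [hpow, ProbabilityTheory.beta, g2, g1, hC, div_eq_mul_inv (_ ^ (-s)) (zetaS s), div_eq_mul_inv _ (zetaS s * _), mul_inv]
  generalize (zetaS s)⁻¹ = Z
  generalize ((x:ℝ) + 1) ^ (-s) = Y
  field_simp
  ring
end

section
/- For every real s > 1 and every natural number x, ∫₀^∞ (e^{-λ} λ^x / x!) · f(λ) dλ = (x+1)^(-s)/ζ(s), where f(λ) = (1/(ζ(s)Γ(s))) ∫₀^∞ (ln(y+1))^(s-1) / (y+1) · e^{-λ y} dy. That is, the Zeta(s) probability mass function is the continuous mixture of Poisson(λ) probability mass functions with mixing density f on (0,∞). -/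
open MeasureTheory

lemma aux_int_s15 {a r : ℝ} (ha : 0 < a) (hr : 0 < r) :
    IntegrableOn (fun t : ℝ => t ^ (a - 1) * Real.exp (-(r * t))) (Set.Ioi 0) := by
  by_contra h
  have h1 := Real.integral_rpow_mul_exp_neg_mul_Ioi ha hr
  rw [integral_undef h] at h1
  have : 0 < (1 / r) ^ a * Real.Gamma a :=
    mul_pos (Real.rpow_pos_of_pos (by positivity) _) (Real.Gamma_pos_of_pos ha)
  linarith

lemma aux_image : (fun t : ℝ => Real.exp t - 1) '' Set.Ioi 0 = Set.Ioi 0 := by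
  ext y
  simp only [Set.mem_image, Set.mem_Ioi]
  constructor
  · rintro ⟨t, ht, rfl⟩
    have := Real.add_one_lt_exp ht.ne'
    linarith
  · intro hy
    refine ⟨Real.log (y + 1), Real.log_pos (by linarith), ?_⟩
    rw [Real.exp_log (by linarith)]; ring

lemma aux_deriv : ∀ t ∈ Set.Ioi (0 : ℝ),
    HasDerivWithinAt (fun t : ℝ => Real.exp t - 1) (Real.exp t) (Set.Ioi 0) t :=
  fun t _ => ((Real.hasDerivAt_exp t).sub_const 1).hasDerivWithinAt

lemma aux_inj : Set.InjOn (fun t : ℝ => Real.exp t - 1) (Set.Ioi 0) := by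
  intro a _ b _ h
  simpa using h

lemma aux_pt (s : ℝ) (x : ℕ) (t : ℝ) :
    |Real.exp t| • ((Real.log ((Real.exp t - 1) + 1)) ^ (s - 1) /
      ((Real.exp t - 1) + 1) * (1 / ((Real.exp t - 1) + 1)) ^ (x + 1))
      = t ^ (s - 1) * Real.exp (-(((x : ℝ) + 1) * t)) := by
  have h : Real.exp (-(((x : ℝ) + 1) * t)) = (1 / Real.exp t) ^ (x + 1) := by
    rw [one_div, ← Real.exp_neg, ← Real.exp_nat_mul]
    push_cast
    ring_nf
  rw [h, sub_add_cancel, Real.log_exp, abs_of_pos (Real.exp_pos t), smul_eq_mul]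
  have := Real.exp_pos t
  field_simp

lemma aux_y (s : ℝ) (hs : 1 < s) (x : ℕ) :
    IntegrableOn (fun y : ℝ => (Real.log (y + 1)) ^ (s - 1) / (y + 1) *
      (1 / (y + 1)) ^ (x + 1)) (Set.Ioi 0) ∧
    ∫ y in Set.Ioi (0 : ℝ), (Real.log (y + 1)) ^ (s - 1) / (y + 1) *
      (1 / (y + 1)) ^ (x + 1) = ((x : ℝ) + 1) ^ (-s) * Real.Gamma s := by
  constructor
  · rw [← aux_image, integrableOn_image_iff_integrableOn_abs_deriv_smul measurableSet_Ioi
      aux_deriv aux_inj]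
    simp only [aux_pt]
    exact aux_int_s15 (by linarith) (by positivity)
  · rw [← aux_image, integral_image_eq_integral_abs_deriv_smul measurableSet_Ioi
      aux_deriv aux_inj]
    simp only [aux_pt]
    rw [Real.integral_rpow_mul_exp_neg_mul_Ioi (by linarith) (by positivity), one_div,
      Real.inv_rpow (by positivity), Real.rpow_neg (by positivity)]

noncomputable def auxF (s : ℝ) (x : ℕ) (lam y : ℝ) : ℝ :=
  (Real.exp (-lam) * lam ^ x / (Nat.factorial x : ℝ)) *
    ((Real.log (y + 1)) ^ (s - 1) / (y + 1) * Real.exp (-lam * y))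

lemma auxF_eq (s : ℝ) (x : ℕ) (lam y : ℝ) :
    auxF s x lam y = ((Real.log (y + 1)) ^ (s - 1) / (y + 1) / (Nat.factorial x : ℝ)) *
      (lam ^ (((x : ℝ) + 1) - 1) * Real.exp (-((y + 1) * lam))) := by
  unfold auxF
  have : Real.exp (-((y + 1) * lam)) = Real.exp (-lam) * Real.exp (-lam * y) := by
    rw [← Real.exp_add]; ring_nf
  rw [this, add_sub_cancel_right, Real.rpow_natCast]
  ring

lemma auxF_int (s : ℝ) (x : ℕ) {y : ℝ} (hy : 0 < y) :
    IntegrableOn (fun lam => auxF s x lam y) (Set.Ioi 0) := by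
  simp only [auxF_eq]
  exact (aux_int_s15 (by positivity) (by positivity)).const_mul _

lemma auxF_integral (s : ℝ) (x : ℕ) {y : ℝ} (hy : 0 < y) :
    ∫ lam in Set.Ioi (0 : ℝ), auxF s x lam y =
      (Real.log (y + 1)) ^ (s - 1) / (y + 1) * (1 / (y + 1)) ^ (x + 1) := by
  simp only [auxF_eq]
  rw [integral_const_mul, Real.integral_rpow_mul_exp_neg_mul_Ioi (by positivity) (by positivity),
    Real.Gamma_nat_eq_factorial]
  have : (1 / (y + 1)) ^ ((x : ℝ) + 1) = (1 / (y + 1)) ^ (x + 1) := by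
    rw [← Real.rpow_natCast]; push_cast; rfl
  rw [this]
  have := Nat.factorial_pos x
  field_simp

lemma auxF_nonneg (s : ℝ) (x : ℕ) {lam y : ℝ} (hl : 0 < lam) (hy : 0 < y) :
    0 ≤ auxF s x lam y := by
  have : 0 ≤ Real.log (y + 1) := Real.log_nonneg (by linarith)
  unfold auxF
  positivity

lemma auxF_prod (s : ℝ) (hs : 1 < s) (x : ℕ) :
    Integrable (Function.uncurry (auxF s x))
      ((volume.restrict (Set.Ioi (0 : ℝ))).prod (volume.restrict (Set.Ioi (0 : ℝ)))) := by
  have hm : Measurable (Function.uncurry (auxF s x)) := by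
    unfold auxF Function.uncurry
    fun_prop
  rw [integrable_prod_iff' hm.aestronglyMeasurable]
  constructor
  · filter_upwards [ae_restrict_mem measurableSet_Ioi] with y hy
    exact auxF_int s x hy
  · refine (aux_y s hs x).1.congr ?_
    filter_upwards [ae_restrict_mem measurableSet_Ioi] with y hy
    rw [← auxF_integral s x hy]
    refine setIntegral_congr_fun measurableSet_Ioi fun l hl => ?_
    exact (Real.norm_of_nonneg (auxF_nonneg s x hl hy)).symm

/-- The Zeta(s) pmf is the continuous mixture of Poisson(λ) pmfs with mixing
density `f(λ) = (1/(ζ(s)Γ(s))) ∫₀^∞ (ln(y+1))^(s-1)/(y+1) e^{-λy} dy`. -/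
theorem zeta_as_poisson_mixture (s : ℝ) (hs : 1 < s) (x : ℕ) :
    ∫ lam in Set.Ioi (0 : ℝ),
        (Real.exp (-lam) * lam ^ x / (Nat.factorial x : ℝ)) *
          ((1 / (zetaS s * Real.Gamma s)) *
            ∫ y in Set.Ioi (0 : ℝ),
              (Real.log (y + 1)) ^ (s - 1) / (y + 1) * Real.exp (-lam * y))
      = ((x : ℝ) + 1) ^ (-s) / zetaS s := by
  have h1 : ∀ lam : ℝ, (Real.exp (-lam) * lam ^ x / (Nat.factorial x : ℝ)) *
          ((1 / (zetaS s * Real.Gamma s)) *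
            ∫ y in Set.Ioi (0 : ℝ),
              (Real.log (y + 1)) ^ (s - 1) / (y + 1) * Real.exp (-lam * y)) =
      (1 / (zetaS s * Real.Gamma s)) * ∫ y in Set.Ioi (0 : ℝ), auxF s x lam y := by
    intro lam
    unfold auxF
    rw [integral_const_mul]
    ring
  simp only [h1]
  rw [integral_const_mul, integral_integral_swap (auxF_prod s hs x),
    setIntegral_congr_fun measurableSet_Ioi (fun y hy => auxF_integral s x hy),
    (aux_y s hs x).2]
  have hG : Real.Gamma s ≠ 0 := (Real.Gamma_pos_of_pos (by linarith)).ne'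
  rw [one_div, mul_inv, div_eq_mul_inv]
  field_simp
end
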